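/- arXiv:2604.13967 — 7 statements merged into one kernel-verified Lean document; each statement's English description precedes it below -/
import Mathlib

section
/- Let q = 2^m where m is a positive even integer, and let f : F_{q^2} → F_{q^2} be defined by f(x) = x^2 + x·(x^q)^{-1} + x^2·(x^q)^{-1} (with the convention 0^{-1} = 0), i.e., f(x) = x^{2} + x^{1-q} + x^{2-q} for x ≠ 0 and f(0) = 0. Then the number of x ∈ F_{q^2} with f(x) = 0 is exactly 3. -/
/-!
A nonzero zero `x` satisfies `x * x ^ q = x + 1`. The left side is the norm of `x` to `F_q`, hence
is fixed by the `q`-Frobenius; therefore so is `x`, and the equation becomes `x ^ 2 + x + 1 = 0`.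
Conversely, as `m` is even, `q ≡ 1 (mod 3)`, so primitive cube roots of unity exist in the field,
are fixed by the `q`-Frobenius, and are zeros. The zeros are thus `0`, `w` and `w + 1`,
with `w` a primitive cube root of unity.
-/

/-- For q = 2^m with m a positive even integer, the trinomial
f(x) = x^2 + x^{1-q} + x^2-q} over F_{q^2} has exactly 3 zeros. -/
theorem stmt_0 (m : ℕ) (hm : 0 < m) (hme : Even m) (q : ℕ) (hq : q = 2 ^ m)
    (K : Type*) [Field K] [Fintype K] [CharP K 2] (hK : Fintype.card K = q ^ 2) :
    {x : K | x ^ 2 + x * (x ^ q)⁻¹ + x ^ 2 * (x ^ q)⁻¹ = 0}.ncard = 3 := by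
  have h2 : (2 : K) = 0 := CharTwo.two_eq_zero
  have hq3 : q % 3 = 1 := by
    obtain ⟨k, rfl⟩ := hme
    rw [hq, ← two_mul, pow_mul, Nat.pow_mod]
    simp
  have hq0 : q ≠ 0 := by omega
  have hfrob : ∀ x : K, (1 + x) ^ q = 1 + x ^ q := fun x => by
    rw [hq, add_pow_char_pow, one_pow]
  have hqq : ∀ x : K, (x ^ q) ^ q = x := fun x => by
    rw [← pow_mul, ← sq, ← hK, FiniteField.pow_card]
  have hfix : ∀ x : K, x ^ 2 + x + 1 = 0 → x ^ q = x := fun x hx => by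
    have h3 : x ^ 3 = 1 := by linear_combination (x - 1) * hx
    have hdiv : q = 3 * (q / 3) + 1 := by omega
    rw [hdiv, pow_succ, pow_mul, h3, one_pow, one_mul]
  obtain ⟨w, hw⟩ : ∃ w : K, w ^ 2 + w + 1 = 0 := by
    classical
    haveI : Fact (Nat.Prime 3) := ⟨by norm_num⟩
    have hdvd : 3 ∣ Fintype.card Kˣ := by
      rw [Fintype.card_units, hK]
      apply (Nat.modEq_iff_dvd' (Nat.one_le_pow _ _ (by omega))).mp
      simp [Nat.ModEq, Nat.pow_mod, hq3]
    obtain ⟨u, hu⟩ := exists_prime_orderOf_dvd_card 3 hdvd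
    have hu3 : (u : K) ^ 3 = 1 := by
      rw [← Units.val_pow_eq_pow_val, ← hu, pow_orderOf_eq_one, Units.val_one]
    have hu1 : (u : K) ≠ 1 := fun h => by
      have : u = 1 := Units.ext h
      simp [this] at hu
    refine ⟨u, mul_left_cancel₀ (sub_ne_zero.mpr hu1) ?_⟩
    linear_combination hu3
  have hw0 : w ≠ 0 := by rintro rfl; simp at hw
  have hw1 : w + 1 ≠ 0 := fun h => by
    have : (1 : K) = 0 := by linear_combination hw - w * h
    exact one_ne_zero this
  have hset : {x : K | x ^ 2 + x * (x ^ q)⁻¹ + x ^ 2 * (x ^ q)⁻¹ = 0} = {0, w, w + 1} := by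
    ext x
    simp only [Set.mem_setOf_eq, Set.mem_insert_iff, Set.mem_singleton_iff]
    by_cases hx : x = 0
    · simp [hx]
    have hxq : x ^ q ≠ 0 := pow_ne_zero _ hx
    have key : x ^ 2 + x * (x ^ q)⁻¹ + x ^ 2 * (x ^ q)⁻¹ = 0 ↔ x * x ^ q + 1 + x = 0 := by
      have : x ^ 2 + x * (x ^ q)⁻¹ + x ^ 2 * (x ^ q)⁻¹
          = (x * (x ^ q)⁻¹) * (x * x ^ q + 1 + x) := by
        generalize x ^ q = y at hxq
        field_simp
      rw [this, mul_eq_zero, or_iff_right (mul_ne_zero hx (inv_ne_zero hxq))]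
    have key2 : x * x ^ q + 1 + x = 0 ↔ x ^ 2 + x + 1 = 0 := by
      constructor
      · intro h
        have h' : x * x ^ q = 1 + x := by linear_combination h - (1 + x) * h2
        -- The `q`-Frobenius fixes the norm `x * x ^ q`, hence also `1 + x`.
        have h'' : x ^ q * x = 1 + x ^ q := by
          rw [← hfrob, ← h', mul_pow, hqq]
        have hxx : x ^ q = x := by linear_combination h' - h''
        rw [hxx] at h
        linear_combination h
      · intro h
        rw [hfix x h]
        linear_combination h
    have hfac : x ^ 2 + x + 1 = (x - w) * (x - (w + 1)) := by
      linear_combination (x + x * w + 1) * h2 - hw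
    rw [key, key2, hfac, mul_eq_zero, sub_eq_zero, sub_eq_zero]
    simp [hx]
  rw [hset]
  refine Set.ncard_eq_three.mpr ⟨0, w, w + 1, hw0.symm, hw1.symm, ?_, rfl⟩
  simp
end

section
/- Let q = 2^m where m is a positive even integer, and let f : F_{q^2} → F_{q^2} be defined by f(x) = x^2 + x·(x^q)^{-1} + x^2·(x^q)^{-1} (with the convention 0^{-1} = 0). Then the set of x ∈ F_{q^2} with f(x) = 0 is exactly {0, ω, ω^2}, where ω is a primitive element of the subfield F_4 of F_{q^2} (i.e., ω satisfies ω^2 + ω + 1 = 0). -/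
/-!
For `x ≠ 0` put `y = x ^ q`. Clearing denominators, `f x = 0` says `x * y = 1 + x`. The map
`z ↦ z ^ q` is additive and swaps `x` and `y`, so also `y * x = 1 + y`; hence `y = x` and
`x ^ 2 + x + 1 = 0`, whose roots are `ω` and `ω ^ 2 = ω + 1`. Conversely, as `q` is a power of `4`,
every root of `x ^ 2 + x + 1` satisfies `x ^ q = x` and is therefore a zero of `f`.
-/

/-- A root of `x ^ 2 + x + 1` satisfies `x ^ 4 = x`, so it is fixed by every `4 ^ k`-th power
map. -/
lemma pow_two_pow_even_of_root {K : Type*} [Field K] {x : K}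
    (hx : x ^ 2 + x + 1 = 0) {m : ℕ} (hm : Even m) : x ^ 2 ^ m = x := by
  have h4 : x ^ 4 = x := by linear_combination (x ^ 2 - x) * hx
  obtain ⟨k, rfl⟩ := hm
  have key : ∀ k : ℕ, x ^ 4 ^ k = x := by
    intro k
    induction k with
    | zero => simp
    | succ k ih => rw [pow_succ, pow_mul, ih, h4]
  rw [← two_mul, pow_mul]
  exact key k

/-- The zero set of f(x) = x^2 + x^{1-q} + x^{2-q} over F_{q^2}
is exactly {0, ω, ω^2}, where ω is a primitive element of F_4 (ω^2 + ω + 1 = 0). -/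
theorem stmt_1 (m : ℕ) (hm : 0 < m) (hme : Even m) (q : ℕ) (hq : q = 2 ^ m)
    (K : Type*) [Field K] [Fintype K] [CharP K 2] (hK : Fintype.card K = q ^ 2)
    (ω : K) (hω : ω ^ 2 + ω + 1 = 0) :
    {x : K | x ^ 2 + x * (x ^ q)⁻¹ + x ^ 2 * (x ^ q)⁻¹ = 0} = {0, ω, ω ^ 2} := by
  have h2 : (2 : K) = 0 := CharTwo.two_eq_zero
  have root_zero : ∀ x : K, x ^ 2 + x + 1 = 0 →
      x ^ 2 + x * (x ^ q)⁻¹ + x ^ 2 * (x ^ q)⁻¹ = 0 := by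
    intro x hx
    have hx0 : x ≠ 0 := by
      rintro rfl
      simp at hx
    rw [hq, pow_two_pow_even_of_root hx hme]
    field_simp
    linear_combination hx
  ext x
  simp only [Set.mem_ofPred_eq, Set.mem_insert_iff, Set.mem_singleton_iff]
  constructor
  · intro h
    by_cases hx0 : x = 0
    · exact Or.inl hx0
    right
    have hy0 : x ^ q ≠ 0 := pow_ne_zero _ hx0
    have h1 : x * x ^ q = 1 + x := by
      have h' : x * (x * x ^ q + 1 + x) = 0 := by
        have e : x * (x * x ^ q + 1 + x)
            = (x ^ 2 + x * (x ^ q)⁻¹ + x ^ 2 * (x ^ q)⁻¹) * x ^ q := by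
          field_simp
        rw [e, h, zero_mul]
      have h'' := (mul_eq_zero.mp h').resolve_left hx0
      linear_combination h'' - (1 + x) * h2
    have hqq : (x ^ q) ^ q = x := by
      rw [← pow_mul, ← sq, ← hK, FiniteField.pow_card]
    have hadd : (1 + x) ^ q = 1 + x ^ q := by
      rw [hq, add_pow_char_pow, one_pow]
    have h3 : x ^ q * x = 1 + x ^ q := by
      have := congrArg (· ^ q) h1
      simpa only [mul_pow, hqq, hadd] using this
    have hy : x ^ q = x := by linear_combination h1 - h3
    rw [hy] at h1
    have hf : (x - ω) * (x - ω ^ 2) = 0 := by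
      linear_combination h1 + (1 + x) * h2 + (ω - 1 - x) * hω
    rcases mul_eq_zero.mp hf with h | h
    · exact Or.inl (sub_eq_zero.mp h)
    · exact Or.inr (sub_eq_zero.mp h)
  · rintro (rfl | rfl | rfl)
    · simp
    · exact root_zero _ hω
    · exact root_zero _ (by linear_combination (ω ^ 2 - ω + 1) * hω)
end

section
/- Let q = 2^m where m is a positive even integer, and let f : F_{q^2} → F_{q^2} be defined by f(x) = x^2 + x·(x^q)^{-1} + x^2·(x^q)^{-1} (with the convention 0^{-1} = 0). Then the number of x ∈ F_{q^2} with f(x) = 1 is exactly q + 1. -/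
/-!
Write `y = x ^ q`, the conjugate of `x` over the subfield of order `q`. For `x ≠ 0` the equation
reads `x² y + x² + x + y = 0`; adding its conjugate `y² x + y² + y + x = 0` gives
`(x + y) (x y + x + y) = 0`. If `y = x`, the equation becomes `x² (x + 1) = 0`, so `x = 1`.
If `x y + x + y = 0`, that is `(x + 1) ^ (q + 1) = 1`, the equation holds automatically.
So the solutions are `1` together with the `u + 1` for `u ≠ 1` a `(q + 1)`-st root of unity.
There are `q + 1` such roots since `Kˣ` is cyclic of order `(q - 1) (q + 1)`.
-/

lemma ncard_pow_succ_eq_one (q : ℕ) (hq : 1 < q) (K : Type*) [Field K] [Fintype K]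
    (hK : Fintype.card K = q ^ 2) : {u : K | u ^ (q + 1) = 1}.ncard = q + 1 := by
  classical
  obtain ⟨g, hg⟩ := IsCyclic.exists_generator (α := Kˣ)
  have ho : orderOf g = q ^ 2 - 1 := by
    rw [orderOf_eq_card_of_forall_mem_zpowers hg, Nat.card_eq_fintype_card,
      Fintype.card_units, hK]
  have hprod : q ^ 2 - 1 = (q - 1) * (q + 1) := by
    rw [mul_comm, ← Nat.sq_sub_sq, one_pow]
  have hprim : IsPrimitiveRoot (g : K) (q ^ 2 - 1) :=
    IsPrimitiveRoot.coe_units_iff.2 (ho ▸ IsPrimitiveRoot.orderOf g)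
  have hpos : 0 < q ^ 2 - 1 := by
    rw [hprod]; exact Nat.mul_pos (by omega) (by omega)
  have hroot := hprim.pow hpos hprod
  have hset : {u : K | u ^ (q + 1) = 1} = (Polynomial.nthRootsFinset (q + 1) (1 : K) : Set K) := by
    ext u
    simp
  rw [hset, Set.ncard_coe_finset, hroot.card_nthRootsFinset]

/-- For q = 2^m with m a positive even integer, the equation
f(x) = 1 with f(x) = x^2 + x^{1-q} + x^{2-q} has exactly q + 1 solutions in F_{q^2}. -/
theorem stmt_2 (m : ℕ) (hm : 0 < m) (hme : Even m) (q : ℕ) (hq : q = 2 ^ m)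
    (K : Type*) [Field K] [Fintype K] [CharP K 2] (hK : Fintype.card K = q ^ 2) :
    {x : K | x ^ 2 + x * (x ^ q)⁻¹ + x ^ 2 * (x ^ q)⁻¹ = 1}.ncard = q + 1 := by
  have hq1 : 1 < q := hq ▸ Nat.one_lt_two_pow hm.ne'
  have h2 : (2 : K) = 0 := CharTwo.two_eq_zero
  have hadd : ∀ a b : K, (a + b) ^ q = a ^ q + b ^ q := by
    intro a b; rw [hq]; exact add_pow_char_pow a b 2 m
  have hconj : ∀ x : K, (x ^ q) ^ q = x := by
    intro x; rw [← pow_mul, ← sq, ← hK, FiniteField.pow_card]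
  have hset : {x : K | x ^ 2 + x * (x ^ q)⁻¹ + x ^ 2 * (x ^ q)⁻¹ = 1} =
      insert 1 ((fun u => u + 1) '' ({u : K | u ^ (q + 1) = 1} \ {1})) := by
    ext x
    have himg : x ∈ (fun u : K => u + 1) '' ({u : K | u ^ (q + 1) = 1} \ {1}) ↔
        (x + 1) ^ (q + 1) = 1 ∧ x ≠ 0 := by
      constructor
      · rintro ⟨u, ⟨hu, hu1⟩, rfl⟩
        have e : u + 1 + 1 = u := by linear_combination h2
        refine ⟨by simpa [e] using hu, fun h => hu1 ?_⟩
        simp only [Set.mem_singleton_iff]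
        linear_combination h - h2
      · rintro ⟨h, h0⟩
        exact ⟨x + 1, ⟨h, by simpa using h0⟩, by linear_combination h2⟩
    have hnorm : (x + 1) ^ (q + 1) = 1 ↔ x * x ^ q + x + x ^ q = 0 := by
      rw [pow_succ, hadd, one_pow]
      constructor <;> intro h <;> linear_combination h
    rw [Set.mem_insert_iff, himg, hnorm, Set.mem_ofPred_eq]
    by_cases h0 : x = 0
    · subst h0; simp
    have hy0 : x ^ q ≠ 0 := pow_ne_zero _ h0
    have hclear : x ^ 2 + x * (x ^ q)⁻¹ + x ^ 2 * (x ^ q)⁻¹ = 1 ↔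
        x ^ 2 * x ^ q + x ^ 2 + x + x ^ q = 0 := by
      have e : (x ^ 2 + x * (x ^ q)⁻¹ + x ^ 2 * (x ^ q)⁻¹) * x ^ q
          = x ^ 2 * x ^ q + x + x ^ 2 := by
        field_simp
      rw [← mul_left_inj' hy0, e, one_mul]
      constructor <;> intro h
      · linear_combination h + x ^ q * h2
      · linear_combination h - x ^ q * h2
    rw [hclear]
    constructor
    · intro h
      have hc : (x ^ q) ^ 2 * x + (x ^ q) ^ 2 + x ^ q + x = 0 := by
        have := congrArg (· ^ q) h
        simp only [hadd, mul_pow, hconj, zero_pow (by omega : q ≠ 0)] at this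
        rwa [pow_right_comm x 2 q] at this
      have hfac : (x + x ^ q) * (x * x ^ q + x + x ^ q) = 0 := by
        linear_combination h + hc + (x * x ^ q - x - x ^ q) * h2
      rcases mul_eq_zero.1 hfac with hxy | hxy
      · left
        have : x ^ 2 * (x + 1) = 0 := by
          linear_combination h - (x ^ 2 + 1) * hxy + x ^ 3 * h2
        have := (mul_eq_zero.1 this).resolve_left (pow_ne_zero 2 h0)
        linear_combination this - h2
      · exact Or.inr ⟨hxy, h0⟩
    · rintro (rfl | ⟨h, -⟩)
      · simp only [one_pow]; linear_combination 2 * h2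
      · linear_combination (x + 1) * h - x * x ^ q * h2
  have hU := ncard_pow_succ_eq_one q hq1 K hK
  rw [hset, Set.ncard_insert_of_notMem, Set.ncard_image_of_injective _ (add_left_injective 1),
    Set.ncard_sdiff_singleton_of_mem (by simp), hU, Nat.add_sub_cancel]
  rintro ⟨u, ⟨hu, -⟩, h⟩
  have : u = 0 := by simpa using h
  simp [this] at hu
end

section
/- Let q = 2^m where m is a positive even integer, let U_{q+1} = {x ∈ F_{q^2} : x^{q+1} = 1}, and let f : F_{q^2} → F_{q^2} be defined by f(x) = x^2 + x·(x^q)^{-1} + x^2·(x^q)^{-1} (with the convention 0^{-1} = 0). Then the set of x ∈ F_{q^2} with f(x) = 1 is exactly {1} ∪ {u + 1 : u ∈ U_{q+1}, u ≠ 1}. -/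
/-! For `x ≠ 0`, clearing the denominator `y = x ^ q` turns the equation into
`y (x + 1) ^ 2 = x (x + 1)`. So either `x = 1` or `y (x + 1) = x`, and in characteristic two the
latter reads `(x + 1) (y + 1) = 1`. Since `y + 1 = (x + 1) ^ q`, this says that `u = x + 1` satisfies
`u ^ (q + 1) = 1`, while `x ≠ 0` means `u ≠ 1`. -/

/-- The solution set of f(x) = 1 with f(x) = x^2 + x^{1-q} + x^{2-q}
is exactly {1} ∪ {u + 1 : u ∈ U_{q+1}, u ≠ 1}. -/
theorem stmt_3 (m : ℕ) (hm : 0 < m) (hme : Even m) (q : ℕ) (hq : q = 2 ^ m)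
    (K : Type*) [Field K] [Fintype K] [CharP K 2] (hK : Fintype.card K = q ^ 2) :
    {x : K | x ^ 2 + x * (x ^ q)⁻¹ + x ^ 2 * (x ^ q)⁻¹ = 1} =
      ({1} : Set K) ∪ {x : K | ∃ u : K, u ^ (q + 1) = 1 ∧ u ≠ 1 ∧ x = u + 1} := by
  have h2 : (2 : K) = 0 := CharTwo.two_eq_zero
  have hF : ∀ a : K, (a + 1) ^ q = a ^ q + 1 := by
    intro a
    rw [hq, add_pow_char_pow, one_pow]
  ext x
  simp only [Set.mem_ofPred_eq, Set.mem_union, Set.mem_singleton_iff]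
  by_cases hx : x = 0
  · subst hx
    constructor
    · intro h
      simp at h
    · rintro (h | ⟨u, -, hu, h⟩)
      · exact absurd h zero_ne_one
      · exact absurd (by linear_combination -h2 - h) hu
  have hy : x ^ q ≠ 0 := pow_ne_zero _ hx
  have key : x ^ 2 + x * (x ^ q)⁻¹ + x ^ 2 * (x ^ q)⁻¹ = 1 ↔
      (x + 1) * (x ^ q * (x + 1) - x) = 0 := by
    field_simp
    constructor <;> intro h
    · linear_combination h + (x * x ^ q + x ^ q - x - x ^ 2) * h2
    · linear_combination h - (x * x ^ q + x ^ q - x - x ^ 2) * h2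
  rw [key, mul_eq_zero]
  refine or_congr ⟨fun h => by linear_combination h - h2, fun h => by rw [h]; linear_combination h2⟩ ?_
  constructor
  · intro h
    refine ⟨x + 1, ?_, fun h1 => hx (by linear_combination h1), by linear_combination -h2⟩
    rw [pow_succ, hF]
    linear_combination h + x * h2
  · rintro ⟨u, hu, -, rfl⟩
    rw [pow_succ] at hu
    rw [hF]
    linear_combination hu + (u ^ q + 1) * h2
end

section
/- Let q = 2^m where m is a positive even integer, and let f : F_{q^2} → F_{q^2} be defined by f(x) = x^2 + x·(x^q)^{-1} + x^2·(x^q)^{-1} (with the convention 0^{-1} = 0). Then for every c ∈ F_{q^2} with c ≠ 0 and c ≠ 1, the number of x ∈ F_{q^2} with f(x) = c is at most 2. -/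
/-!
Write `σ x = x ^ q`, an involutive automorphism of `K`. Since `c ≠ 0`, a solution `x` is nonzero and
satisfies `x² σx + x + x² = c σx`; since `c ∉ {0, 1}`, also `x² ≠ c`. Eliminating `σx` between this
equation and its conjugate gives `(σc + 1) x⁴ + (c + 1) x + c + σc c² = 0`, so the difference `a` of
two distinct solutions satisfies `σ(c + 1) a³ = c + 1` (`cube_of_sub`), whence `(a σa)³ = 1`.

Three distinct solutions thus have the form `x, x + t b, x + b` with `t² + t + 1 = 0`. As `m` is even,
`σ t = t`, so the norms `a σa` of the three differences `b, t b, (t + 1) b` are the three cube roots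
of unity. Taking as base point the solution not on the edge of norm `1`, one may assume
`b σb = t²`; then a linear combination of the three equations gives `σb (x² + c) = 0`,
which is impossible (`core`).
-/

namespace FiberBound

variable {K : Type*} [Field K]

/-- `x` is a solution of the equation with denominators cleared, where `s` plays the role of
`x ↦ x ^ q`. -/
def Sol (s : K →+* K) (c x : K) : Prop := x ^ 2 * s x + x + x ^ 2 = c * s x

lemma sq_ne {s : K →+* K} (h2 : (2 : K) = 0) {c x : K} (hc0 : c ≠ 0) (hc1 : c ≠ 1)
    (h : Sol s c x) : x ^ 2 + c ≠ 0 := by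
  intro h0
  unfold Sol at h
  have h3 : x * (x + 1) = 0 := by
    linear_combination h - s x * h0 + c * s x * h2
  rcases mul_eq_zero.1 h3 with h4 | h4
  · apply hc0
    linear_combination h0 - x * h4
  · apply hc1
    linear_combination h0 - (x - 1) * h4 - h2

/-- Eliminating `s x` between the equation and its conjugate leaves an affine quartic in `x`. -/
lemma quartic {s : K →+* K} (h2 : (2 : K) = 0) (hs : ∀ x, s (s x) = x) {c x : K} (hc0 : c ≠ 0)
    (hc1 : c ≠ 1) (hx : x ≠ 0) (h : Sol s c x) :
    (s c + 1) * x ^ 4 + (c + 1) * x + c + s c * c ^ 2 = 0 := by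
  have hne := sq_ne h2 hc0 hc1 h
  have h' := congrArg s h
  unfold Sol at h
  simp only [map_add, map_mul, map_pow, hs] at h'
  generalize s x = y at *
  generalize s c = d at *
  have hy : y = x * (x + 1) / (x ^ 2 + c) := by
    rw [eq_div_iff hne]
    linear_combination h + (c * y - x - x ^ 2) * h2
  rw [hy] at h'
  field_simp at h'
  clear hy h hne hx hc0 hc1
  grind

lemma cube_of_sub {s : K →+* K} (h2 : (2 : K) = 0) (hs : ∀ x, s (s x) = x) {c x y : K}
    (hc0 : c ≠ 0) (hc1 : c ≠ 1) (hx : x ≠ 0) (hy : y ≠ 0) (hxy : x ≠ y)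
    (h : Sol s c x) (h' : Sol s c y) : s (c + 1) * (x + y) ^ 3 = c + 1 := by
  have e1 := quartic h2 hs hc0 hc1 hx h
  have e2 := quartic h2 hs hc0 hc1 hy h'
  have hne : x + y ≠ 0 := fun h0 => hxy (by linear_combination h0 - y * h2)
  apply mul_right_cancel₀ hne
  rw [map_add, map_one]
  grind

/-- Three solutions cannot form a triangle whose edges at the base point `x` have norms `t²`
and `t`. -/
lemma core {s : K →+* K} (h2 : (2 : K) = 0) {c x b t : K} (hc0 : c ≠ 0)
    (hc1 : c ≠ 1) (ht : t ^ 2 + t + 1 = 0) (hst : s t = t) (hb : b * s b = t ^ 2)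
    (h0 : Sol s c x) (h1 : Sol s c (x + b)) (h3 : Sol s c (x + t * b)) : False := by
  have hne := sq_ne h2 hc0 hc1 h0
  unfold Sol at *
  simp only [map_add, map_mul, hst] at h1 h3
  generalize s x = y at *
  generalize s b = w at *
  have ht0 : t ≠ 0 := by rintro rfl; simp at ht
  have ht1 : t + 1 ≠ 0 := by
    intro h; apply ht0
    exact pow_eq_zero_iff (two_ne_zero) |>.1 (by linear_combination ht - h)
  have hw : w ≠ 0 := by rintro rfl; apply ht0; simpa using hb.symm
  have ht3 : t ^ 3 = 1 := by linear_combination (t - 1) * ht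
  have d1 : w * (x ^ 2 + c) + b ^ 2 * (y + w + 1) + b = 0 := by grind
  have d2 : w * (x ^ 2 + c) + t * b ^ 2 * (y + t * w + 1) + b = 0 := by
    apply mul_left_cancel₀ ht0
    grind
  have d3 : w * (x ^ 2 + c) + t * b ^ 2 * w + b = 0 := by
    apply mul_left_cancel₀ ht1
    grind
  have d4 : w * (x ^ 2 + c) = 0 := by grind
  exact (mul_ne_zero hw hne) d4

lemma no_three {s : K →+* K} (h2 : (2 : K) = 0) (hs : ∀ x, s (s x) = x)
    (hst : ∀ t, t ^ 2 + t + 1 = 0 → s t = t) {c x y z : K} (hc0 : c ≠ 0) (hc1 : c ≠ 1)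
    (hx : x ≠ 0) (hy : y ≠ 0) (hz : z ≠ 0) (hxy : x ≠ y) (hxz : x ≠ z) (hyz : y ≠ z)
    (h1 : Sol s c x) (h3 : Sol s c y) (h4 : Sol s c z) : False := by
  have ca := cube_of_sub h2 hs hc0 hc1 hx hy hxy h1 h3
  have cb := cube_of_sub h2 hs hc0 hc1 hx hz hxz h1 h4
  obtain ⟨b, rfl⟩ : ∃ b, z = x + b := ⟨z - x, by ring⟩
  have hb : b ≠ 0 := by rintro rfl; simp at hxz
  obtain ⟨t, rfl⟩ : ∃ t, y = x + t * b := ⟨(y - x) / b, by field_simp; ring⟩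
  have ht1 : t ≠ 1 := by rintro rfl; simp at hyz
  have he : c + 1 ≠ 0 := fun h => hc1 (by linear_combination h - h2)
  have hse : s (c + 1) ≠ 0 := (map_ne_zero s).2 he
  have e1 : x + (x + t * b) = t * b := by linear_combination x * h2
  have e2 : x + (x + b) = b := by linear_combination x * h2
  rw [e1] at ca
  rw [e2] at cb
  have ht3 : t ^ 3 = 1 := by
    apply mul_left_cancel₀ (mul_ne_zero hse (pow_ne_zero 3 hb))
    linear_combination ca - cb
  have ht : t ^ 2 + t + 1 = 0 := by
    apply mul_left_cancel₀ (sub_ne_zero.2 ht1)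
    linear_combination ht3
  have hst := hst t ht
  have cb' := congrArg s cb
  rw [map_mul, hs, map_pow] at cb'
  have hn : (b * s b) ^ 3 = 1 := by
    apply mul_left_cancel₀ (mul_ne_zero he hse)
    linear_combination s (c + 1) * b ^ 3 * cb' + s (c + 1) * cb
  have hcases : (b * s b - 1) * ((b * s b - t) * (b * s b - t ^ 2)) = 0 := by
    generalize b * s b = n at *
    linear_combination hn + (-n ^ 2 + n * t) * ht - ht3
  rcases mul_eq_zero.1 hcases with h | h
    -- the edge `b` has norm `1`: the base point is `x + t b`
  · refine core (x := x + t * b) (b := t * b) h2 hc0 hc1 ht hst ?_ h3 ?_ ?_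
    · rw [map_mul, hst]; linear_combination t ^ 2 * h
    · convert h1 using 1; linear_combination t * b * h2
    · convert h4 using 1; linear_combination b * ht - b * h2
  rcases mul_eq_zero.1 h with h | h
    -- the edge `t b` has norm `1`: the base point is `x + b`
  · refine core (x := x + b) (b := t ^ 2 * b) h2 hc0 hc1 ht hst ?_ h4 ?_ ?_
    · rw [map_mul, map_pow, hst]; linear_combination t ^ 4 * h + t ^ 2 * ht3
    · convert h3 using 1; linear_combination b * ht - t * b * h2
    · convert h1 using 1; linear_combination b * ht3 + b * h2
  · exact core h2 hc0 hc1 ht hst (by linear_combination h) h1 h4 h3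

end FiberBound

open FiberBound in
/-- For every c ∈ F_{q^2} \ F_2, the equation f(x) = c with
f(x) = x^2 + x^{1-q} + x^{2-q} has at most 2 solutions in F_{q^2}. -/
theorem stmt_4 (m : ℕ) (hm : 0 < m) (hme : Even m) (q : ℕ) (hq : q = 2 ^ m)
    (K : Type*) [Field K] [Fintype K] [CharP K 2] (hK : Fintype.card K = q ^ 2)
    (c : K) (hc0 : c ≠ 0) (hc1 : c ≠ 1) :
    {x : K | x ^ 2 + x * (x ^ q)⁻¹ + x ^ 2 * (x ^ q)⁻¹ = c}.ncard ≤ 2 := by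
  have h2 : (2 : K) = 0 := CharTwo.two_eq_zero
  have hsd : ∀ x, iterateFrobenius K 2 m x = x ^ q := fun x => by
    rw [iterateFrobenius_def, hq]
  generalize iterateFrobenius K 2 m = s at hsd
  have hs : ∀ x, s (s x) = x := fun x => by
    rw [hsd, hsd, ← pow_mul, ← sq, ← hK, FiniteField.pow_card]
  have hst : ∀ t : K, t ^ 2 + t + 1 = 0 → s t = t := by
    intro t ht
    have ht4 : t ^ 4 = t := by linear_combination (t ^ 2 - t) * ht
    obtain ⟨k, rfl⟩ := hme
    rw [hsd, hq, ← two_mul, pow_mul]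
    norm_num
    clear * - ht4
    induction k with
    | zero => simp
    | succ k ih => rw [pow_succ, pow_mul, ih, ht4]
  have key : ∀ x : K, x ^ 2 + x * (x ^ q)⁻¹ + x ^ 2 * (x ^ q)⁻¹ = c → x ≠ 0 ∧ Sol s c x := by
    intro x hx
    have hx0 : x ≠ 0 := by
      rintro rfl
      apply hc0
      rw [← hx]; simp
    refine ⟨hx0, ?_⟩
    unfold Sol
    rw [hsd, ← hx]
    have := pow_ne_zero q hx0
    field_simp
  by_contra hcon
  rw [not_le, Set.two_lt_ncard_iff] at hcon
  obtain ⟨x, y, z, hx, hy, hz, hxy, hxz, hyz⟩ := hcon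
  obtain ⟨hx0, hx⟩ := key x hx
  obtain ⟨hy0, hy⟩ := key y hy
  obtain ⟨hz0, hz⟩ := key z hz
  exact no_three h2 hs hst hc0 hc1 hx0 hy0 hz0 hxy hxz hyz hx hy hz
end

section
/- Let q = 2^m for a positive integer m, and let U_{q+1} = {x ∈ F_{q^2} : x^{q+1} = 1}. If u_1, u_2, u_3, u_4 are four pairwise distinct elements of U_{q+1}, then u_1 + u_2 + u_3 + u_4 ≠ 0. -/
/-!
Every `u` in `U_{q+1}` satisfies `u ^ q = u⁻¹`. Raising `u₁ + u₂ + u₃ + u₄ = 0` to the `q`-th power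
and clearing denominators therefore shows that the third elementary symmetric function of the `uᵢ`
vanishes as well. After substituting `u₄ = u₁ + u₂ + u₃` it becomes, in characteristic 2,
`(u₁ + u₂) * (u₁ + u₃) * (u₂ + u₃)`, so two of `u₁, u₂, u₃` coincide.
-/

/-- Four pairwise distinct elements of U_{q+1} ⊆ F_{q^2}^* never sum to zero. -/
theorem stmt_5 (m : ℕ) (hm : 0 < m) (q : ℕ) (hq : q = 2 ^ m)
    (K : Type*) [Field K] [Fintype K] [CharP K 2] (hK : Fintype.card K = q ^ 2)
    (u₁ u₂ u₃ u₄ : K)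
    (h₁ : u₁ ^ (q + 1) = 1) (h₂ : u₂ ^ (q + 1) = 1)
    (h₃ : u₃ ^ (q + 1) = 1) (h₄ : u₄ ^ (q + 1) = 1)
    (h₁₂ : u₁ ≠ u₂) (h₁₃ : u₁ ≠ u₃) (h₁₄ : u₁ ≠ u₄)
    (h₂₃ : u₂ ≠ u₃) (h₂₄ : u₂ ≠ u₄) (h₃₄ : u₃ ≠ u₄) :
    u₁ + u₂ + u₃ + u₄ ≠ 0 := by
  intro hs
  have h2 : (2 : K) = 0 := CharTwo.two_eq_zero
  have hv : u₁ ^ q + u₂ ^ q + u₃ ^ q + u₄ ^ q = 0 := by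
    subst hq
    rw [← add_pow_char_pow, ← add_pow_char_pow, ← add_pow_char_pow, hs]
    exact zero_pow (by positivity)
  rw [pow_succ] at h₁ h₂ h₃ h₄
  have he : u₂ * u₃ * u₄ + u₁ * u₃ * u₄ + u₁ * u₂ * u₄ + u₁ * u₂ * u₃ = 0 := by
    linear_combination u₁ * u₂ * u₃ * u₄ * hv - u₂ * u₃ * u₄ * h₁ - u₁ * u₃ * u₄ * h₂
      - u₁ * u₂ * u₄ * h₃ - u₁ * u₂ * u₃ * h₄
  have hu₄ : u₄ = u₁ + u₂ + u₃ := by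
    linear_combination hs - (u₁ + u₂ + u₃) * h2
  have hp : (u₁ + u₂) * (u₁ + u₃) * (u₂ + u₃) = 0 := by
    rw [hu₄] at he
    linear_combination he - u₁ * u₂ * u₃ * h2
  rcases mul_eq_zero.mp hp with h | h
  · rcases mul_eq_zero.mp h with h | h
    · exact h₁₂ (CharTwo.add_eq_zero.mp h)
    · exact h₁₃ (CharTwo.add_eq_zero.mp h)
  · exact h₂₃ (CharTwo.add_eq_zero.mp h)
end

section
/- Let q = 2^m for a positive integer m and let d = 3q - 2. Let n_3 denote the number of triples (x_1, x_2, x_3) ∈ (F_{q^2}^*)^3 satisfying x_1 + x_2 + x_3 = 0 and x_1^d + x_2^d + x_3^d = 0. Then n_3 = (q - 2)(q^2 - 1) if m is even, and n_3 = q(q^2 - 1) if m is odd. -/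
/-!
Write `y = x ^ q`, so that `x ^ (3q - 2) = y ^ 3 / x ^ 2`. By homogeneity each triple is
`(a, a u, a (1 + u))` with `a` and `u` nonzero and `u ≠ 1`, and the second equation becomes
`1 + y ^ 3 / u ^ 2 + (1 + y) ^ 3 / (1 + u) ^ 2 = 0` with `y = u ^ q`. In characteristic `2`,
clearing denominators gives `(u ^ 2 + y) (u + y) ^ 2 = 0` (`ratio_iff`). Hence
`n_3 = (q ^ 2 - 1) N`, where `N` is the number of `u ≠ 0, 1` with `u ^ q = u` or `u ^ q = u ^ 2`.

The first equation says `u ^ (q - 1) = 1`. The second forces `u = u ^ (q ^ 2) = u ^ 4`, that is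
`u ^ 3 = 1`. When `m` is odd, `q ≡ 2 (mod 3)`, so every cube root of unity satisfies it; when `m`
is even, `q ≡ 1 (mod 3)`, and only `u = 1` does. Counting roots of unity in the cyclic group
`Kˣ` gives `N = q - 2` for even `m` and `N = (q - 1) + 3 - 2 = q` for odd `m`.
-/

/-- The admissible ratios `x₂ / x₁` of a solution triple. -/
def ratioSet (K : Type*) [Field K] (q : ℕ) : Set Kˣ :=
  {u | u ≠ 1 ∧ (u ^ q = u ∨ u ^ q = u ^ 2)}

/-- The exponent equation for the normalised triple `(1, x, 1 + x)`: multiplied by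
`x ^ 2 (1 + x) ^ 2` it factors, in characteristic `2`, as `(x ^ q - x) ^ 2 (x ^ q - x ^ 2) = 0`. -/
lemma ratio_iff {K : Type*} [Field K] [CharP K 2] {m q : ℕ} (hq : q = 2 ^ m)
    {x : K} (h0 : x ≠ 0) (h1 : 1 + x ≠ 0) :
    1 + x ^ (3 * q - 2) + (1 + x) ^ (3 * q - 2) = 0 ↔ x ^ q = x ∨ x ^ q = x ^ 2 := by
  have two : (2 : K) = 0 := CharTwo.two_eq_zero
  have hq1 : 1 ≤ q := hq ▸ Nat.one_le_two_pow
  have hmul : ∀ z : K, z ^ (3 * q - 2) * z ^ 2 = (z ^ q) ^ 3 := fun z => by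
    rw [← pow_add, ← pow_mul]; congr 1; omega
  have hadd : (1 + x) ^ q = 1 + x ^ q := by
    rw [hq, add_pow_char_pow, one_pow]
  have e1 := hmul x
  have e2 := hmul (1 + x)
  rw [hadd] at e2
  generalize x ^ (3 * q - 2) = s at *
  generalize (1 + x) ^ (3 * q - 2) = t at *
  generalize x ^ q = y at *
  have key : (1 + s + t) * (x ^ 2 * (1 + x) ^ 2) = (y - x) ^ 2 * (y - x ^ 2) := by
    -- The multiple of `two` collects the even coefficients and signs left over integrally.
    linear_combination (1 + x) ^ 2 * e1 + x ^ 2 * e2 +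
      (x ^ 2 + x ^ 3 + y ^ 3 * x + y ^ 3 * x ^ 2 + x ^ 2 * y + 2 * x ^ 2 * y ^ 2 + x ^ 4
        + x * y ^ 2 - x ^ 3 * y) * two
  have hne : x ^ 2 * (1 + x) ^ 2 ≠ 0 := mul_ne_zero (pow_ne_zero _ h0) (pow_ne_zero _ h1)
  constructor
  · intro h
    rw [h, zero_mul] at key
    rcases mul_eq_zero.1 key.symm with h | h
    · exact Or.inl (sub_eq_zero.1 (pow_eq_zero_iff two_ne_zero |>.1 h))
    · exact Or.inr (sub_eq_zero.1 h)
  · intro h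
    have hz : (y - x) ^ 2 * (y - x ^ 2) = 0 := by rcases h with h | h <;> simp [h]
    rw [hz] at key
    exact (mul_eq_zero.1 key).resolve_right hne

lemma ncard_pow_eq_one {G : Type*} [CommGroup G] [IsCyclic G] [Finite G] {d : ℕ}
    (hd : d ∣ Nat.card G) : {u : G | u ^ d = 1}.ncard = d := by
  have h := IsCyclic.card_powMonoidHom_ker (G := G) d
  rw [Nat.gcd_eq_right hd] at h
  exact h

lemma two_pow_mod_three (m : ℕ) : 2 ^ m % 3 = if Even m then 1 else 2 := by
  induction m with
  | zero => rfl
  | succ k ih =>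
    rw [pow_succ, Nat.mul_mod, ih]
    by_cases h : Even k <;> simp [h, Nat.even_add_one]

lemma ncard_ratioSet {K : Type*} [Field K] [Fintype K] {m q : ℕ} (hm : 0 < m)
    (hq : q = 2 ^ m) (hK : Fintype.card K = q ^ 2) :
    ((ratioSet K q).ncard : ℤ) = if Even m then (q : ℤ) - 2 else q := by
  classical
  have hq2 : 2 ≤ q := hq ▸ Nat.le_self_pow hm.ne' 2
  have hmod : q % 3 = if Even m then 1 else 2 := hq ▸ two_pow_mod_three m
  have hcard : Nat.card Kˣ = (q + 1) * (q - 1) := by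
    rw [Nat.card_units, Nat.card_eq_fintype_card, hK]
    exact Nat.sq_sub_sq q 1
  have hA : {u : Kˣ | u ^ (q - 1) = 1}.ncard = q - 1 :=
    ncard_pow_eq_one (hcard ▸ dvd_mul_left _ _)
  have hpow : ∀ u : Kˣ, u ^ q = u ↔ u ^ (q - 1) = 1 := fun u => by
    rw [← mul_left_inj (a := u) (b := u ^ (q - 1)), ← pow_succ, one_mul,
      Nat.sub_add_cancel (by omega)]
  -- Applying the `q`-power map twice is the identity, which turns `u ^ q = u ^ 2` into `u ^ 4 = u`.
  have hcube : ∀ u : Kˣ, u ^ q = u ^ 2 → u ^ 3 = 1 := fun u hu => by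
    have h1 : u ^ (q ^ 2) = u := by
      ext; push_cast; rw [← hK]; exact FiniteField.pow_card _
    rw [pow_two, pow_mul, hu, ← pow_mul, mul_comm, pow_mul, hu, ← pow_mul] at h1
    rw [← mul_left_inj (a := u), ← pow_succ, one_mul]
    exact h1
  have hred : ∀ u : Kˣ, u ^ 3 = 1 → u ^ q = u ^ (q % 3) := fun u hu => by
    conv_lhs => rw [← Nat.mod_add_div q 3, pow_add, pow_mul, hu, one_pow, mul_one]
  by_cases hev : Even m
  · rw [if_pos hev] at hmod ⊢
    have hS : ratioSet K q = {u : Kˣ | u ^ (q - 1) = 1} \ {1} := by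
      ext u
      simp only [ratioSet, Set.mem_ofPred_eq, Set.mem_sdiff, Set.mem_singleton_iff, ← hpow]
      constructor
      · rintro ⟨h1, h | h⟩
        · exact ⟨h, h1⟩
        · have := hred u (hcube u h)
          rw [hmod, pow_one] at this
          exact ⟨this, h1⟩
      · rintro ⟨h, h1⟩
        exact ⟨h1, Or.inl h⟩
    rw [hS, Set.ncard_sdiff_singleton_of_mem (by simp), hA]
    omega
  · rw [if_neg hev] at hmod ⊢
    have hB : {u : Kˣ | u ^ 3 = 1}.ncard = 3 := by
      refine ncard_pow_eq_one (hcard ▸ Dvd.dvd.mul_right ?_ _)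
      omega
    have hS : ratioSet K q = ({u : Kˣ | u ^ (q - 1) = 1} ∪ {u : Kˣ | u ^ 3 = 1}) \ {1} := by
      ext u
      have h3 : u ^ q = u ^ 2 ↔ u ^ 3 = 1 := ⟨hcube u, fun h => by rw [hred u h, hmod]⟩
      simp only [ratioSet, Set.mem_ofPred_eq, Set.mem_sdiff, Set.mem_singleton_iff, Set.mem_union,
        ← hpow, h3]
      tauto
    have hI : {u : Kˣ | u ^ (q - 1) = 1} ∩ {u : Kˣ | u ^ 3 = 1} = {1} := by
      ext u
      simp only [Set.mem_inter_iff, Set.mem_ofPred_eq, Set.mem_singleton_iff, ← hpow]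
      constructor
      · rintro ⟨h1, h3⟩
        have h := hred u h3
        rw [hmod, h1, pow_two] at h
        exact left_eq_mul.1 h
      · rintro rfl
        simp
    have hU := Set.ncard_union_add_ncard_inter {u : Kˣ | u ^ (q - 1) = 1} {u : Kˣ | u ^ 3 = 1}
    rw [hI, hA, hB, Set.ncard_singleton] at hU
    rw [hS, Set.ncard_sdiff_singleton_of_mem (by simp)]
    omega

/-- Counting triples in (F_{q^2}^*)^3 with x₁+x₂+x₃ = 0 and
x₁^d + x₂^d + x₃^d = 0, where d = 3q - 2. -/
theorem stmt_6 (m : ℕ) (hm : 0 < m) (q : ℕ) (hq : q = 2 ^ m)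
    (K : Type*) [Field K] [Fintype K] [CharP K 2] (hK : Fintype.card K = q ^ 2) :
    ({p : K × K × K | p.1 ≠ 0 ∧ p.2.1 ≠ 0 ∧ p.2.2 ≠ 0 ∧
        p.1 + p.2.1 + p.2.2 = 0 ∧
        p.1 ^ (3 * q - 2) + p.2.1 ^ (3 * q - 2) + p.2.2 ^ (3 * q - 2) = 0}.ncard : ℤ) =
      if Even m then ((q : ℤ) - 2) * ((q : ℤ) ^ 2 - 1)
      else (q : ℤ) * ((q : ℤ) ^ 2 - 1) := by
  have hone : ∀ u : Kˣ, 1 + (u : K) ≠ 0 ↔ u ≠ 1 := fun u => by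
    rw [Ne, CharTwo.add_eq_zero, eq_comm, Units.val_eq_one]
  have hunit : ∀ u : Kˣ, ((u : K) ^ q = u ∨ (u : K) ^ q = (u : K) ^ 2) ↔
      (u ^ q = u ∨ u ^ q = u ^ 2) := fun u => by
    simp only [Units.ext_iff, Units.val_pow_eq_pow_val]
  set f : Kˣ × Kˣ → K × K × K :=
    fun z => ((z.1 : K), (z.1 : K) * z.2, (z.1 : K) * (1 + z.2)) with hf
  have hinj : Function.Injective f := by
    rintro ⟨a, u⟩ ⟨b, v⟩ h
    simp only [hf, Prod.mk.injEq] at h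
    obtain ⟨h1, h2, -⟩ := h
    obtain rfl := Units.ext h1
    obtain rfl := Units.ext (mul_left_cancel₀ a.ne_zero h2)
    rfl
  have himg : {p : K × K × K | p.1 ≠ 0 ∧ p.2.1 ≠ 0 ∧ p.2.2 ≠ 0 ∧
        p.1 + p.2.1 + p.2.2 = 0 ∧
        p.1 ^ (3 * q - 2) + p.2.1 ^ (3 * q - 2) + p.2.2 ^ (3 * q - 2) = 0} =
      f '' (Set.univ ×ˢ ratioSet K q) := by
    have hfac : ∀ a x : K, a ^ (3 * q - 2) + (a * x) ^ (3 * q - 2) + (a * (1 + x)) ^ (3 * q - 2) =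
        a ^ (3 * q - 2) * (1 + x ^ (3 * q - 2) + (1 + x) ^ (3 * q - 2)) := fun a x => by
      rw [mul_pow, mul_pow]; ring
    ext ⟨a, b, c⟩
    simp only [Set.mem_ofPred_eq, Set.mem_image, Set.mem_prod, Set.mem_univ, true_and]
    constructor
    · rintro ⟨ha, hb, hc, hs, hd⟩
      have hb' : b = a * (b / a) := by field_simp
      have hc' : c = a * (1 + b / a) := by
        rw [CharTwo.add_eq_zero] at hs
        rw [← hs]; field_simp
      have hu : 1 + b / a ≠ 0 := fun h => hc (by rw [hc', h, mul_zero])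
      refine ⟨(Units.mk0 a ha, Units.mk0 (b / a) (div_ne_zero hb ha)), ⟨(hone _).1 hu, ?_⟩, ?_⟩
      · rw [← hunit]
        refine (ratio_iff hq (div_ne_zero hb ha) hu).1 ?_
        have hfac' := hfac a (b / a)
        rw [← hb', ← hc', hd] at hfac'
        exact (mul_eq_zero.1 hfac'.symm).resolve_left (pow_ne_zero _ ha)
      · simp only [hf, Units.val_mk0, ← hb', ← hc']
    · rintro ⟨⟨x, u⟩, ⟨h1, h2⟩, h⟩
      simp only [hf, Prod.mk.injEq] at h
      obtain ⟨rfl, rfl, rfl⟩ := h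
      have hu := (hone u).2 h1
      refine ⟨x.ne_zero, mul_ne_zero x.ne_zero u.ne_zero, mul_ne_zero x.ne_zero hu, ?_, ?_⟩
      · rw [CharTwo.add_eq_zero]; ring
      · rw [hfac, (ratio_iff hq u.ne_zero hu).2 ((hunit u).2 h2), mul_zero]
  have hq1 : 1 ≤ q ^ 2 := Nat.one_le_pow _ _ (hq ▸ Nat.two_pow_pos m)
  rw [himg, Set.ncard_image_of_injective _ hinj, Set.ncard_prod, Set.ncard_univ, Nat.card_units,
    Nat.card_eq_fintype_card, hK, Nat.cast_mul, ncard_ratioSet hm hq hK, Nat.cast_sub hq1]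
  push_cast
  split_ifs <;> ring
end
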